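/- Let Λ be an artin algebra, P the class of finitely generated modules of finite projective dimension, assumed contravariantly finite, and E the direct sum of the indecomposable Ext-injective modules in P. Then E is isomorphic to the direct sum of the minimal right P-approximations of the indecomposable injective Λ-modules (up to multiplicity of summands, i.e., add E = add(⊕_j A_j) where f_j: A_j → I_j are the minimal approximations). -/

import Mathlib

open CategoryTheory

universe u

/-- The `n`-th Ext group of `A`-modules `M`, `N`. -/
noncomputable abbrev ext {A : Type u} [Ring A] (M N : ModuleCat.{u} A) (n : ℕ) : Type u :=
  ((Ext ℤ (ModuleCat.{u} A) n).obj (Opposite.op M)).obj N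

/-- `Ext^i(N, M) = 0` for all `i > 0`. -/
def ExtVanish {A : Type u} [Ring A] (N M : ModuleCat.{u} A) : Prop :=
  ∀ i, 0 < i → Subsingleton (ext N M i)

/-- `M` has projective dimension at most `n`, i.e. `Ext^i(M, -) = 0` for `i > n`. -/
def pdLE {A : Type u} [Ring A] (M : ModuleCat.{u} A) (n : ℕ) : Prop :=
  ∀ i, n < i → ∀ N : ModuleCat.{u} A, Subsingleton (ext M N i)

/-- The projective dimension of `M`, as an element of `ℕ∞` (`⊤` if infinite). -/
noncomputable def projDim {A : Type u} [Ring A] (M : ModuleCat.{u} A) : ℕ∞ :=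
  sInf {d : ℕ∞ | ∃ n : ℕ, d = n ∧ pdLE M n}

/-- Membership in `𝒫`: finitely generated of finite projective dimension. -/
def InP {A : Type u} [Ring A] (M : ModuleCat.{u} A) : Prop :=
  Module.Finite A M ∧ ∃ n, pdLE M n

/-- The finitistic dimension of `A`. -/
noncomputable def findim (A : Type u) [Ring A] : ℕ∞ :=
  sSup {d : ℕ∞ | ∃ M : ModuleCat.{u} A, InP M ∧ d = projDim M}

/-- `M` is a direct summand of `S`. -/
def IsSummand {A : Type u} [Ring A] (M S : ModuleCat.{u} A) : Prop :=
  ∃ (s : M →ₗ[A] S) (r : S →ₗ[A] M), r ∘ₗ s = LinearMap.id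

/-- `M` belongs to `add 𝒳`: `M` is a direct summand of a finite direct sum of objects of `𝒳`. -/
def InAddOf {A : Type u} [Ring A] (X : ModuleCat.{u} A → Prop) (M : ModuleCat.{u} A) : Prop :=
  ∃ (k : ℕ) (F : Fin k → ModuleCat.{u} A), (∀ i, X (F i)) ∧
    IsSummand M (ModuleCat.of A (DirectSum (Fin k) (fun i => ↥(F i))))

/-- `M` belongs to `Add T`: `M` is a direct summand of an arbitrary direct sum of copies of `T`. -/
def InAdd {A : Type u} [Ring A] (T M : ModuleCat.{u} A) : Prop :=
  ∃ ι : Type u, IsSummand M (ModuleCat.of A (DirectSum ι (fun _ => ↥T)))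

/-- `M ∈ 𝒳^⊥`: `Ext^i(N, M) = 0` for all `N ∈ 𝒳` and `i > 0`. -/
def InPerpOf {A : Type u} [Ring A] (X : ModuleCat.{u} A → Prop) (M : ModuleCat.{u} A) : Prop :=
  ∀ N, X N → ExtVanish N M

/-- `M` is Ext-injective in `𝒫`: `M ∈ 𝒫` and `Ext^1(N, M) = 0` for all `N ∈ 𝒫`. -/
def ExtInjInP {A : Type u} [Ring A] (M : ModuleCat.{u} A) : Prop :=
  InP M ∧ ∀ N : ModuleCat.{u} A, InP N → Subsingleton (ext N M 1)

/-- `M` is splitting injective in `𝒳`: every injective map `M → Y` with `Y ∈ add 𝒳` splits. -/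
def SplittingInjIn {A : Type u} [Ring A] (X : ModuleCat.{u} A → Prop)
    (M : ModuleCat.{u} A) : Prop :=
  ∀ Y : ModuleCat.{u} A, InAddOf X Y → ∀ f : M →ₗ[A] Y, Function.Injective f →
    ∃ r : Y →ₗ[A] M, r ∘ₗ f = LinearMap.id

/-- `0 → M₁ → M₂ → M₃ → 0` is a short exact sequence. -/
def ShortExact {A : Type u} [Ring A] {M₁ M₂ M₃ : ModuleCat.{u} A}
    (f : M₁ →ₗ[A] M₂) (g : M₂ →ₗ[A] M₃) : Prop :=
  Function.Injective f ∧ Function.Exact f g ∧ Function.Surjective g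

/-- `f : XM → M` is a right `𝒳`-approximation of `M`. -/
def IsRightApprox {A : Type u} [Ring A] (X : ModuleCat.{u} A → Prop)
    {XM M : ModuleCat.{u} A} (f : XM →ₗ[A] M) : Prop :=
  X XM ∧ ∀ Y : ModuleCat.{u} A, X Y → ∀ g : Y →ₗ[A] M, ∃ h : Y →ₗ[A] XM, f ∘ₗ h = g

/-- `f : XM → M` is a minimal right `𝒳`-approximation. -/
def IsMinimalRightApprox {A : Type u} [Ring A] (X : ModuleCat.{u} A → Prop)
    {XM M : ModuleCat.{u} A} (f : XM →ₗ[A] M) : Prop :=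
  IsRightApprox X f ∧ ∀ g : XM →ₗ[A] XM, f ∘ₗ g = f → Function.Bijective g

/-- `𝒳` is contravariantly finite in `mod A`. -/
def ContravariantlyFinite {A : Type u} [Ring A] (X : ModuleCat.{u} A → Prop) : Prop :=
  ∀ M : ModuleCat.{u} A, Module.Finite A M →
    ∃ (XM : ModuleCat.{u} A) (f : XM →ₗ[A] M), IsRightApprox X f

/-- `M` is an indecomposable module: nonzero, and its only idempotent endomorphisms
are `0` and the identity. -/
def Indec {A : Type u} [Ring A] (M : ModuleCat.{u} A) : Prop :=
  (¬ Subsingleton M) ∧ ∀ e : M →ₗ[A] M, e ∘ₗ e = e → e = 0 ∨ e = LinearMap.id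

/-- `L` admits a finite coresolution `0 → L → C^0 → ⋯ → C^n → 0` with all `C^i ∈ add T`. -/
def HasAddCoresolution {A : Type u} [Ring A] (T L : ModuleCat.{u} A) : Prop :=
  ∃ (C : ℕ → ModuleCat.{u} A) (d : ∀ i, C i →ₗ[A] C (i+1)) (f : L →ₗ[A] C 0),
    Function.Injective f ∧ Function.Exact f (d 0) ∧
    (∀ i, Function.Exact (d i) (d (i+1))) ∧
    (∀ i, InAddOf (fun X => X = T) (C i)) ∧
    (∃ m, ∀ i, m ≤ i → Subsingleton (C i))

/-- `T` is a tilting `A`-module. -/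
def IsTilting {A : Type u} [Ring A] (T : ModuleCat.{u} A) : Prop :=
  Module.Finite A T ∧ (∃ n, pdLE T n) ∧ ExtVanish T T ∧
    HasAddCoresolution T (ModuleCat.of A A)

/-- `𝒳` is a resolving subcategory of `mod A`. -/
def Resolving {A : Type u} [Ring A] (X : ModuleCat.{u} A → Prop) : Prop :=
  (∀ M : ModuleCat.{u} A, Module.Finite A M → Module.Projective A M → X M) ∧
  (∀ (M₁ M₂ M₃ : ModuleCat.{u} A) (f : M₁ →ₗ[A] M₂) (g : M₂ →ₗ[A] M₃),
      ShortExact f g → X M₁ → X M₃ → X M₂) ∧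
  (∀ (M₁ M₂ M₃ : ModuleCat.{u} A) (f : M₁ →ₗ[A] M₂) (g : M₂ →ₗ[A] M₃),
      ShortExact f g → X M₂ → X M₃ → X M₁)

/-- `F` is a complete irredundant family of representatives of the isomorphism classes of
indecomposable Ext-injective modules in `𝒫`. -/
def IsCompleteExtInjFamily {A : Type u} [Ring A] {ι : Type u}
    (F : ι → ModuleCat.{u} A) : Prop :=
  (∀ i, Indec (F i) ∧ ExtInjInP (F i)) ∧
  (∀ M : ModuleCat.{u} A, Indec M → ExtInjInP M → ∃ i, Nonempty (M ≃ₗ[A] F i)) ∧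
  (∀ i j, Nonempty (F i ≃ₗ[A] F j) → i = j)

/-- `I` is a complete set of pairwise non-isomorphic indecomposable injective modules. -/
def IsCompleteIndecInjFamily {A : Type u} [Ring A] {n : ℕ}
    (I : Fin n → ModuleCat.{u} A) : Prop :=
  (∀ j, Module.Finite A (I j) ∧ Module.Injective A (I j) ∧ Indec (I j)) ∧
  (∀ M : ModuleCat.{u} A, Module.Finite A M → Module.Injective A M → Indec M →
      ∃ j, Nonempty (M ≃ₗ[A] I j)) ∧
  (∀ j k, Nonempty (I j ≃ₗ[A] I k) → j = k)

open CategoryTheory.Abelian in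
theorem subsingleton_ext_succ_iff {A : Type u} [Ring A] (M N : ModuleCat.{u} A) (n : ℕ) :
    Subsingleton (ext M N (n + 1)) ↔ Subsingleton (Abelian.Ext.{u} M N (n + 1)) := by
  let P := ProjectiveResolution.of M
  have h₁ : Subsingleton (ext M N (n + 1)) ↔
      ∀ f : P.complex.X (n + 1) ⟶ N, P.complex.d (n + 2) (n + 1) ≫ f = 0 →
        ∃ g : P.complex.X n ⟶ N, P.complex.d (n + 1) n ≫ g = f := by
    rw [← ModuleCat.isZero_iff_subsingleton, (P.isoExt (n + 1) N).isZero_iff,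
      ← HomologicalComplex.exactAt_iff_isZero_homology,
      HomologicalComplex.exactAt_iff' _ n (n + 1) (n + 2) (by simp) (by simp),
      ShortComplex.moduleCat_exact_iff]
    rfl
  rw [h₁]
  constructor
  · intro h
    refine subsingleton_of_forall_eq 0 fun α => ?_
    obtain ⟨f, hf, rfl⟩ := P.extMk_surjective α (n + 2) rfl
    exact (P.extMk_eq_zero_iff f _ rfl hf n rfl).2 (h f hf)
  · intro h f hf
    exact (P.extMk_eq_zero_iff f _ rfl hf n rfl).1 (Subsingleton.elim _ _)

theorem pdLE_iff_hasProjectiveDimensionLE {A : Type u} [Ring A] (M : ModuleCat.{u} A) (n : ℕ) :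
    pdLE M n ↔ HasProjectiveDimensionLE M n := by
  rw [HasProjectiveDimensionLE, hasProjectiveDimensionLT_iff]
  constructor
  · intro h i hi Y e
    obtain ⟨j, rfl⟩ : ∃ j, i = j + 1 := ⟨i - 1, by lia⟩
    have := (subsingleton_ext_succ_iff M Y j).1 (h _ hi Y)
    exact Subsingleton.elim _ _
  · intro h i hi Y
    obtain ⟨j, rfl⟩ : ∃ j, i = j + 1 := ⟨i - 1, by lia⟩
    exact (subsingleton_ext_succ_iff M Y j).2 (subsingleton_of_forall_eq 0 fun e => h _ hi e)

theorem inP_iff {A : Type u} [Ring A] (M : ModuleCat.{u} A) :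
    InP M ↔ Module.Finite A M ∧ ∃ n, HasProjectiveDimensionLT M n := by
  refine and_congr_right fun _ => ⟨fun ⟨n, hn⟩ => ⟨n + 1, ?_⟩, fun ⟨n, hn⟩ => ⟨n, ?_⟩⟩
  · exact (pdLE_iff_hasProjectiveDimensionLE M n).1 hn
  · exact (pdLE_iff_hasProjectiveDimensionLE M n).2 (hasProjectiveDimensionLT_of_ge M n _ n.le_succ)

theorem ShortExact.shortComplex {A : Type u} [Ring A] {M₁ M₂ M₃ : ModuleCat.{u} A}
    {f : M₁ →ₗ[A] M₂} {g : M₂ →ₗ[A] M₃} (h : ShortExact f g) :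
    (ShortComplex.mk (ModuleCat.ofHom f) (ModuleCat.ofHom g)
      (by ext x; exact h.2.1.apply_apply_eq_zero x)).ShortExact where
  exact := (ShortComplex.ShortExact.moduleCat_exact_iff_function_exact _).2 h.2.1
  mono_f := (ModuleCat.mono_iff_injective _).2 h.1
  epi_g := (ModuleCat.epi_iff_surjective _).2 h.2.2

theorem ShortExact.inP_right {A : Type u} [Ring A] {M₁ M₂ M₃ : ModuleCat.{u} A}
    {f : M₁ →ₗ[A] M₂} {g : M₂ →ₗ[A] M₃} (h : ShortExact f g) (h₁ : InP M₁) (h₂ : InP M₂) :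
    InP M₃ := by
  obtain ⟨-, n₁, hn₁⟩ := (inP_iff M₁).1 h₁
  obtain ⟨_, n₂, hn₂⟩ := (inP_iff M₂).1 h₂
  refine (inP_iff M₃).2 ⟨Module.Finite.of_surjective g h.2.2, n₁ + n₂ + 1, ?_⟩
  exact h.shortComplex.hasProjectiveDimensionLT_X₃ (n₁ + n₂)
    (hasProjectiveDimensionLT_of_ge _ n₁ _ (by lia))
    (hasProjectiveDimensionLT_of_ge _ n₂ _ (by lia))

theorem ShortExact.inP_left {A : Type u} [Ring A] [IsNoetherianRing A] {M₁ M₂ M₃ : ModuleCat.{u} A}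
    {f : M₁ →ₗ[A] M₂} {g : M₂ →ₗ[A] M₃} (h : ShortExact f g) (h₂ : InP M₂) (h₃ : InP M₃) :
    InP M₁ := by
  obtain ⟨_, n₂, hn₂⟩ := (inP_iff M₂).1 h₂
  obtain ⟨-, n₃, hn₃⟩ := (inP_iff M₃).1 h₃
  refine (inP_iff M₁).2 ⟨Module.Finite.of_injective f h.1, n₂ + n₃, ?_⟩
  exact h.shortComplex.hasProjectiveDimensionLT_X₁ (n₂ + n₃)
    (hasProjectiveDimensionLT_of_ge _ n₂ _ (by lia))
    (hasProjectiveDimensionLT_of_ge _ n₃ _ (by lia))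

theorem inP_of_projective {A : Type u} [Ring A] (M : ModuleCat.{u} A) [Module.Finite A M]
    [Module.Projective A M] : InP M :=
  (inP_iff M).2 ⟨inferInstance, 1, have := (IsProjective.iff_projective M).1 ‹_›; inferInstance⟩

/-- The identity of `M` is a finite sum of endomorphisms `r k ∘ s k` factoring through the
modules `Y k`, i.e. `M` is a direct summand of the finite direct sum of the `Y k`. -/
def IsFiniteSummand {A : Type u} [Ring A] {κ : Type*} [Fintype κ] (Y : κ → ModuleCat.{u} A)
    (M : ModuleCat.{u} A) : Prop :=
  ∃ (s : ∀ k, M →ₗ[A] Y k) (r : ∀ k, Y k →ₗ[A] M), ∑ k, r k ∘ₗ s k = LinearMap.id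

namespace IsFiniteSummand

variable {A : Type u} [Ring A] {κ : Type*} [Fintype κ] {Y : κ → ModuleCat.{u} A}
  {M : ModuleCat.{u} A}

theorem finite (h : IsFiniteSummand Y M) (hY : ∀ k, Module.Finite A (Y k)) :
    Module.Finite A M := by
  obtain ⟨s, r, hrs⟩ := h
  classical
  refine Module.Finite.of_surjective (LinearMap.lsum A (fun k => Y k) ℕ r) fun x =>
    ⟨fun k => s k x, ?_⟩
  simpa using LinearMap.congr_fun hrs x

open CategoryTheory.Abelian in
theorem ext_eq_zero_left (h : IsFiniteSummand Y M) {N : ModuleCat.{u} A} {i : ℕ}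
    (hY : ∀ k, Subsingleton (Abelian.Ext.{u} (Y k) N i)) (e : Abelian.Ext.{u} M N i) : e = 0 := by
  obtain ⟨s, r, hrs⟩ := h
  have : 𝟙 M = ∑ k, ModuleCat.ofHom (s k) ≫ ModuleCat.ofHom (r k) := by
    ext x
    simpa using (LinearMap.congr_fun hrs x).symm
  rw [← Abelian.Ext.mk₀_id_comp e, this, Abelian.Ext.mk₀_sum, Abelian.Ext.sum_comp]
  refine Finset.sum_eq_zero fun k _ => ?_
  rw [← Abelian.Ext.mk₀_comp_mk₀_assoc, Subsingleton.elim ((Abelian.Ext.mk₀ _).comp e _) 0,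
    Abelian.Ext.comp_zero]

theorem inP (h : IsFiniteSummand Y M) (hY : ∀ k, InP (Y k)) : InP M := by
  choose n hn using fun k => ((inP_iff (Y k)).1 (hY k)).2
  refine (inP_iff M).2 ⟨h.finite fun k => (hY k).1, ∑ k, n k, ?_⟩
  rw [hasProjectiveDimensionLT_iff]
  refine fun i hi N e => h.ext_eq_zero_left (fun k => ?_) e
  have := hn k
  exact HasProjectiveDimensionLT.subsingleton (Y k) (n k) i
    ((Finset.single_le_sum (fun _ _ => Nat.zero_le _) (Finset.mem_univ k)).trans hi) N

theorem ext_eq_zero_right (h : IsFiniteSummand Y M) {N : ModuleCat.{u} A} {i : ℕ}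
    (hY : ∀ k, Subsingleton (Abelian.Ext.{u} N (Y k) i)) (e : Abelian.Ext.{u} N M i) : e = 0 := by
  obtain ⟨s, r, hrs⟩ := h
  have : 𝟙 M = ∑ k, ModuleCat.ofHom (s k) ≫ ModuleCat.ofHom (r k) := by
    ext x
    simpa using (LinearMap.congr_fun hrs x).symm
  rw [← Abelian.Ext.comp_mk₀_id e, this, Abelian.Ext.mk₀_sum, Abelian.Ext.comp_sum]
  refine Finset.sum_eq_zero fun k _ => ?_
  rw [← Abelian.Ext.mk₀_comp_mk₀, ← Abelian.Ext.comp_assoc_of_third_deg_zero,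
    Subsingleton.elim (e.comp _ _) 0, Abelian.Ext.zero_comp]

theorem extInjInP (h : IsFiniteSummand Y M) (hY : ∀ k, ExtInjInP (Y k)) : ExtInjInP M := by
  refine ⟨h.inP fun k => (hY k).1, fun N hN => ?_⟩
  refine (subsingleton_ext_succ_iff N M 0).2 (subsingleton_of_forall_eq 0 fun e => ?_)
  exact h.ext_eq_zero_right (fun k => (subsingleton_ext_succ_iff N (Y k) 0).1 ((hY k).2 N hN)) e

end IsFiniteSummand

theorem isFiniteSummand_pi {A : Type u} [Ring A] {κ : Type} [Fintype κ] (Y : κ → ModuleCat.{u} A) :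
    IsFiniteSummand Y (ModuleCat.of A (∀ k, Y k)) := by
  classical
  refine ⟨fun k => LinearMap.proj k, fun k => LinearMap.single A (fun k => Y k) k, ?_⟩
  ext x j
  simp [Finset.sum_apply]

/-- A minimal right `𝒫`-approximation of an injective module is Ext-injective in `𝒫`. -/
theorem IsMinimalRightApprox.extInjInP {A : Type u} [Ring A] [IsNoetherianRing A]
    {X I : ModuleCat.{u} A} {f : X →ₗ[A] I} (hf : IsMinimalRightApprox InP f)
    (hI : Module.Injective A I) : ExtInjInP X := by
  refine ⟨hf.1.1, fun N hN => ?_⟩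
  have := hN.1
  obtain ⟨m, p, hp⟩ := Module.Finite.exists_fin' A N
  let P : ModuleCat.{u} A := ModuleCat.of A (Fin m → A)
  let K : ModuleCat.{u} A := ModuleCat.of A (LinearMap.ker p)
  let i : K →ₗ[A] P := (LinearMap.ker p).subtype
  have hi : Function.Injective i := Subtype.val_injective
  have hKP : ShortExact i (p : P →ₗ[A] N) :=
    ⟨hi, LinearMap.exact_subtype_ker_map p, hp⟩
  have hP : InP P := inP_of_projective P
  have hK : InP K := hKP.inP_left hP hN
  have key (g : K →ₗ[A] X) : ∃ g' : P →ₗ[A] X, g' ∘ₗ i = g := by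
    let j : K →ₗ[A] ModuleCat.of A (X × P) := LinearMap.prod g (-i)
    let Q : ModuleCat.{u} A := ModuleCat.of A ((X × P) ⧸ LinearMap.range j)
    let q : ModuleCat.of A (X × P) →ₗ[A] Q := (LinearMap.range j).mkQ
    have hj : Function.Injective j := fun x y h => hi (neg_injective (congrArg Prod.snd h))
    have hjq : ShortExact j q :=
      ⟨hj, LinearMap.exact_map_mkQ_range j, Submodule.mkQ_surjective _⟩
    have hXP : InP (ModuleCat.of A (X × P)) := by
      refine IsFiniteSummand.inP (κ := Bool) (Y := fun b => bif b then X else P)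
        ⟨fun b => match b with
          | true => LinearMap.fst A X P
          | false => LinearMap.snd A X P,
        fun b => match b with
          | true => LinearMap.inl A X P
          | false => LinearMap.inr A X P, ?_⟩ (fun b => by cases b; exacts [hP, hf.1.1])
      ext x <;> simp
    have hQ : InP Q := hjq.inP_right hK hXP
    obtain ⟨v, hv⟩ := hI.out i hi (f ∘ₗ g)
    let w : Q →ₗ[A] I := (LinearMap.range j).liftQ (f.coprod v) (by
      rintro _ ⟨x, rfl⟩
      simp [j, hv])
    obtain ⟨h, hh⟩ := hf.1.2 Q hQ w
    let φ : X →ₗ[A] X := h ∘ₗ q ∘ₗ LinearMap.inl A X P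
    have hφ : f ∘ₗ φ = f := by
      ext x
      have h₁ : f (h (q (x, 0))) = w (q (x, 0)) := LinearMap.congr_fun hh _
      have h₂ : w (q (x, 0)) = f.coprod v (x, 0) := Submodule.liftQ_apply _ _ _
      simpa [φ, h₂] using h₁
    let e := LinearEquiv.ofBijective φ (hf.2 φ hφ)
    refine ⟨e.symm.toLinearMap ∘ₗ h ∘ₗ q ∘ₗ LinearMap.inr A X P, ?_⟩
    ext x
    have h₁ : q (g x, -i x) = 0 := (Submodule.Quotient.mk_eq_zero _).2 ⟨x, rfl⟩
    have h₂ : q (0, i x) = q (g x, 0) := by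
      rw [← sub_eq_zero, ← map_sub, ← neg_eq_zero, ← map_neg, ← h₁]
      simp
    change e.symm (h (q (0, i x))) = g x
    rw [h₂, LinearEquiv.symm_apply_eq]
    rfl
  refine (subsingleton_ext_succ_iff N X 0).2 (subsingleton_of_forall_eq 0 fun e => ?_)
  have : Projective P :=
    (IsProjective.iff_projective P).1 (inferInstanceAs (Module.Projective A (Fin m → A)))
  obtain ⟨a, rfl⟩ := Abelian.Ext.contravariant_sequence_exact₃ hKP.shortComplex X e
    (Abelian.Ext.eq_zero_of_projective (P := P) _) (n₀ := 0) rfl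
  obtain ⟨g, rfl⟩ := Abelian.Ext.addEquiv₀.symm.surjective a
  obtain ⟨g', hg'⟩ := key g.hom
  have hg : g = ModuleCat.ofHom i ≫ ModuleCat.ofHom g' := by
    ext x
    exact (LinearMap.congr_fun hg' x).symm
  rw [hg]
  change Abelian.Ext.comp _ (Abelian.Ext.mk₀ _) _ = 0
  rw [← Abelian.Ext.mk₀_comp_mk₀]
  exact hKP.shortComplex.extClass_comp_assoc (Abelian.Ext.mk₀ (ModuleCat.ofHom g'))

/-- An injective map from an Ext-injective module in `𝒫` into a module in `𝒫` splits. -/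
theorem ExtInjInP.exists_retraction {A : Type u} [Ring A] {X Y : ModuleCat.{u} A}
    (hX : ExtInjInP X) (hY : InP Y) (s : X →ₗ[A] Y) (hs : Function.Injective s) :
    ∃ r : Y →ₗ[A] X, r ∘ₗ s = LinearMap.id := by
  let C : ModuleCat.{u} A := ModuleCat.of A (Y ⧸ LinearMap.range s)
  let q : Y →ₗ[A] C := (LinearMap.range s).mkQ
  have h : ShortExact s q := ⟨hs, LinearMap.exact_map_mkQ_range s, Submodule.mkQ_surjective _⟩
  have := (subsingleton_ext_succ_iff C X 0).1 (hX.2 C (h.inP_right hX.1 hY))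
  obtain ⟨a, ha⟩ := Abelian.Ext.contravariant_sequence_exact₁ h.shortComplex X
    (Abelian.Ext.mk₀ (𝟙 X)) (n₁ := 1) rfl (this.elim _ _)
  obtain ⟨r, rfl⟩ := Abelian.Ext.addEquiv₀.symm.surjective a
  refine ⟨r.hom, ?_⟩
  change (Abelian.Ext.mk₀ _).comp (Abelian.Ext.mk₀ r) _ = _ at ha
  rw [Abelian.Ext.mk₀_comp_mk₀] at ha
  have := (Abelian.Ext.mk₀_bijective _ _).1 ha
  exact congrArg ModuleCat.Hom.hom this

/-- In an essential extension of `X`, every semisimple submodule is contained in `X`. -/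
theorem le_of_isSemisimpleModule_of_essential {A M : Type*} [Ring A] [AddCommGroup M] [Module A M]
    {X E N : Submodule A M} (hE : ∀ N ≤ E, N ⊓ X = ⊥ → N = ⊥) (hN : N ≤ E)
    [IsSemisimpleModule A N] : N ≤ X := by
  obtain ⟨C, hC⟩ := exists_isCompl (X.comap N.subtype)
  have h : C.map N.subtype ⊓ X = ⊥ := by
    rw [eq_bot_iff]
    rintro _ ⟨⟨x, hx, rfl⟩, hxX⟩
    have : x ∈ X.comap N.subtype ⊓ C := ⟨hxX, hx⟩
    rw [hC.inf_eq_bot, Submodule.mem_bot] at this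
    simp [this]
  have hbot := hE _ ((Submodule.map_subtype_le N C).trans hN) h
  rw [← Submodule.map_bot N.subtype] at hbot
  replace hbot := Submodule.map_injective_of_injective N.subtype_injective hbot
  have := hC.sup_eq_top
  rw [hbot, sup_bot_eq, Submodule.comap_subtype_eq_top] at this
  exact this

/-- Over an artin algebra, essential extensions of finitely generated modules are finitely
generated. -/
theorem finite_of_essential {A : Type*} [Ring A] (R : Type*) [CommRing R] [IsArtinianRing R]
    [Algebra R A] [Module.Finite R A] {M : Type*} [AddCommGroup M] [Module A M]
    {X E : Submodule A M} [Module.Finite A X] (hE : ∀ N ≤ E, N ⊓ X = ⊥ → N = ⊥) :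
    Module.Finite A E := by
  have : IsArtinianRing A := .of_finite R A
  let _ : Module R M := Module.compHom M (algebraMap R A)
  have : IsScalarTower R A M := ⟨fun r a m => by
    rw [Algebra.smul_def, mul_smul]
    rfl⟩
  let J : Ideal A := Ring.jacobson A
  obtain ⟨m, hm⟩ : IsNilpotent J := IsSemiprimaryRing.isNilpotent
  have hX : Module.Finite R X := Module.Finite.trans A X
  let K : Submodule A M :=
    { carrier := {x | ∀ a ∈ J, a • x = 0}
      add_mem' := fun hx hy a ha => by rw [smul_add, hx a ha, hy a ha, add_zero]
      zero_mem' := fun a _ => smul_zero a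
      smul_mem' := fun c x hx a ha => by
        rw [smul_smul]
        exact hx _ (J.mul_mem_right c ha) }
  have hK (N : Submodule A M) (hNE : N ≤ E) (hNK : N ≤ K) : N ≤ X := by
    have h : Module.IsTorsionBySet A N J := fun x a => Subtype.ext (hNK x.2 a a.2)
    let _ := h.module
    have : IsSemisimpleModule A N :=
      (h.semilinearMap.isSemisimpleModule_iff_of_bijective Function.bijective_id).2
        inferInstance
    exact le_of_isSemisimpleModule_of_essential hE hNE
  obtain ⟨S, hS⟩ : (J.restrictScalars R).FG := IsNoetherian.noetherian _
  have key : ∀ (n : ℕ) (N : Submodule A M), N ≤ E → (∀ a ∈ J ^ n, ∀ x ∈ N, a • x = 0) →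
      IsNoetherian R N := by
    intro n
    induction n with
    | zero =>
      intro N _ hN
      have : N = ⊥ := (Submodule.eq_bot_iff N).2 fun x hx => by
        simpa using hN 1 (by rw [J.pow_zero, Ideal.one_eq_top]; trivial) x hx
      subst this
      infer_instance
    | succ n ih =>
      intro N hNE hN
      have hJN : J • N ≤ N := Submodule.smul_le_right
      have : IsNoetherian R (J • N : Submodule A M) := by
        refine ih _ (hJN.trans hNE) fun a ha x hx => ?_
        refine Submodule.smul_induction_on hx (fun b hb y hy => ?_) fun x y hx hy => ?_
        · rw [smul_smul]
          exact hN _ (by rw [J.pow_succ]; exact Ideal.mul_mem_mul ha hb) y hy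
        · rw [smul_add, hx, hy, add_zero]
      let φ : N →ₗ[R] (S → (J • N : Submodule A M)) :=
        { toFun := fun x s => ⟨(s : A) • (x : M), Submodule.smul_mem_smul
            (show (s : A) ∈ J.restrictScalars R from hS ▸ Submodule.subset_span s.2) x.2⟩
          map_add' := fun x y => by ext s; simp
          map_smul' := fun r x => by
            ext s
            change (s : A) • algebraMap R A r • (x : M) = algebraMap R A r • (s : A) • (x : M)
            rw [smul_smul, smul_smul, Algebra.commutes] }
      have hφ (x : N) (hx : φ x = 0) : (x : M) ∈ X := by
        refine hK (N ⊓ K) (inf_le_left.trans hNE) inf_le_right ⟨x.2, fun a ha => ?_⟩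
        replace ha : a ∈ Submodule.span R (S : Set A) := hS ▸ ha
        induction ha using Submodule.span_induction with
        | mem s hs => exact congrArg Subtype.val (congrFun hx ⟨s, hs⟩)
        | zero => exact zero_smul _ _
        | add b c _ _ hb hc => rw [add_smul, hb, hc, add_zero]
        | smul r b _ hb => rw [smul_assoc, hb, smul_zero]
      let ψ : LinearMap.ker φ →ₗ[R] X :=
        { toFun := fun x => ⟨x.1, hφ x.1 x.2⟩
          map_add' := fun _ _ => rfl
          map_smul' := fun _ _ => rfl }
      have : IsNoetherian R (LinearMap.ker φ) :=
        isNoetherian_of_injective ψ fun x y h =>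
          Subtype.ext (Subtype.ext (show (x.1 : M) = y.1 from congrArg (X.subtype) h))
      exact isNoetherian_of_range_eq_ker (LinearMap.ker φ).subtype φ (by simp)
  have : IsNoetherian R E := key m E le_rfl fun a ha x _ => by
    rw [hm] at ha
    rw [(Submodule.mem_bot A).1 ha, zero_smul]
  exact Module.Finite.of_restrictScalars_finite R A E

/-- A submodule of an injective module is contained in a direct summand that is an essential
extension of it. -/
theorem exists_essential_retract {A : Type u} [Ring A] {Q : Type u} [AddCommGroup Q] [Module A Q]
    (hQ : Module.Injective A Q) (X : Submodule A Q) :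
    ∃ E : Submodule A Q, X ≤ E ∧ (∀ N ≤ E, N ⊓ X = ⊥ → N = ⊥) ∧
      ∃ p : Q →ₗ[A] E, p ∘ₗ E.subtype = LinearMap.id := by
  obtain ⟨E, hXE, ⟨-, hE⟩, hmax⟩ := zorn_le_nonempty₀
    {E : Submodule A Q | X ≤ E ∧ ∀ N ≤ E, N ⊓ X = ⊥ → N = ⊥} (by
      intro c hc hchain y hy
      refine ⟨sSup c, ⟨(hc hy).1.trans (le_sSup hy), fun N hN hNX => ?_⟩, fun z => le_sSup⟩
      refine (Submodule.eq_bot_iff N).2 fun x hx => ?_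
      obtain ⟨F, hF, hxF⟩ := (Submodule.mem_sSup_of_directed ⟨y, hy⟩ hchain.directedOn).1 (hN hx)
      refine Submodule.span_singleton_eq_bot.1 ((hc hF).2 (Submodule.span A {x}) ?_ ?_)
      · simpa using hxF
      · exact eq_bot_mono (inf_le_inf_right X (by simpa using hx)) hNX) X
    ⟨le_rfl, fun N hN hNX => by rwa [inf_eq_left.2 hN] at hNX⟩
  obtain ⟨C, -, hCE, hCmax⟩ := zorn_le_nonempty₀
    {C : Submodule A Q | ∀ x ∈ C, x ∈ E → x = 0} (by
      intro c hc hchain y hy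
      refine ⟨sSup c, fun x hx hxE => ?_, fun z => le_sSup⟩
      obtain ⟨F, hF, hxF⟩ := (Submodule.mem_sSup_of_directed ⟨y, hy⟩ hchain.directedOn).1 hx
      exact hc hF x hxF hxE) ⊥ (fun x hx _ => by simpa using hx)
  obtain ⟨g, hg⟩ := hQ.out (C.mkQ ∘ₗ E.subtype) (by
    rw [← LinearMap.ker_eq_bot, LinearMap.ker_eq_bot']
    intro x hx
    exact Subtype.ext (hCE x ((Submodule.Quotient.mk_eq_zero C).1 hx) x.2)) E.subtype
  let p : Q →ₗ[A] Q := g ∘ₗ C.mkQ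
  have hp (x : Q) (hx : x ∈ E) : p x = x := hg ⟨x, hx⟩
  have hC (N : Submodule A Q) (hN : ∀ x ∈ N, x ∈ E → x = 0) (x : Q) (hx : p x ∈ N) : p x = 0 := by
    have : N.comap p ≤ C := hCmax (y := N.comap p)
      (fun y hy hyE => hN y (by simpa [hp y hyE] using hy) hyE)
      (fun y hy => by
        have : p y = 0 := by
          change g (C.mkQ y) = 0
          rw [show C.mkQ y = 0 from (Submodule.Quotient.mk_eq_zero C).2 hy, map_zero]
        simp [this])
    change g (C.mkQ x) = 0
    rw [show C.mkQ x = 0 from (Submodule.Quotient.mk_eq_zero C).2 (this hx), map_zero]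
  have hrange : LinearMap.range p ≤ E := by
    refine hmax (y := LinearMap.range p) ⟨?_, ?_⟩ fun x hx => ⟨x, hp x hx⟩
    · exact fun x hx => ⟨x, hp x (hXE hx)⟩
    · intro N hN hNX
      have hNE : N ⊓ E = ⊥ :=
        hE _ inf_le_right (eq_bot_mono (inf_le_inf_right X inf_le_left) hNX)
      refine (Submodule.eq_bot_iff N).2 fun x hx => ?_
      obtain ⟨y, rfl⟩ := hN hx
      exact hC N (fun z hz hzE => by simpa [hNE] using show z ∈ N ⊓ E from ⟨hz, hzE⟩) y hx
  refine ⟨E, hXE, hE, p.codRestrict E fun x => hrange ⟨x, rfl⟩, ?_⟩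
  ext x
  exact hp x x.2

theorem Module.Injective.of_retract {A : Type u} [Ring A] {M N : Type u} [AddCommGroup M]
    [Module A M] [AddCommGroup N] [Module A N] (hM : Module.Injective A M) (s : N →ₗ[A] M)
    (r : M →ₗ[A] N) (h : r ∘ₗ s = LinearMap.id) : Module.Injective A N where
  out _ _ _ _ _ _ f hf g := by
    obtain ⟨k, hk⟩ := hM.out f hf (s ∘ₗ g)
    exact ⟨r ∘ₗ k, fun x => by simpa [hk] using LinearMap.congr_fun h (g x)⟩

/-- Over an artin algebra, finitely generated modules embed in finitely generated injective
modules. -/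
theorem exists_finite_injective_embedding {A : Type u} [Ring A] (R : Type*) [CommRing R]
    [IsArtinianRing R] [Algebra R A] [Module.Finite R A] (M : ModuleCat.{u} A)
    [Module.Finite A M] :
    ∃ (Q : ModuleCat.{u} A) (i : M →ₗ[A] Q), Module.Finite A Q ∧ Module.Injective A Q ∧
      Function.Injective i := by
  let I : ModuleCat.{u} A := CategoryTheory.Injective.under M
  let ι : M ⟶ I := CategoryTheory.Injective.ι M
  let i : M →ₗ[A] I := ι.hom
  have hi : Function.Injective i :=
    (ModuleCat.mono_iff_injective ι).1 (CategoryTheory.Injective.ι_mono M)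
  have hQ : Module.Injective A I :=
    (Module.injective_iff_injective_object A I).2 (CategoryTheory.Injective.injective_under M)
  obtain ⟨E, hXE, hE, p, hp⟩ := exists_essential_retract hQ (LinearMap.range i)
  refine ⟨ModuleCat.of A E, i.codRestrict E fun x => hXE ⟨x, rfl⟩, finite_of_essential R hE,
    hQ.of_retract E.subtype p hp, ?_⟩
  exact fun x y h => hi (congrArg Subtype.val h)

/-- Every finitely generated module over an artinian ring is a finite direct sum of indecomposable
modules. -/
theorem exists_indec_decomposition {A : Type u} [Ring A] [IsArtinianRing A] (M : ModuleCat.{u} A)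
    [Module.Finite A M] :
    ∃ (κ : Type) (_ : Fintype κ) (Y : κ → ModuleCat.{u} A) (s : ∀ k, M →ₗ[A] Y k)
      (r : ∀ k, Y k →ₗ[A] M), (∀ k, Indec (Y k)) ∧ (∀ k, s k ∘ₗ r k = LinearMap.id) ∧
        ∑ k, r k ∘ₗ s k = LinearMap.id := by
  obtain ⟨n, hn⟩ := ENat.ne_top_iff_exists.1 (Module.length_ne_top (R := A) (M := M))
  induction n using Nat.strong_induction_on generalizing M with
  | _ n ih =>
    by_cases hM : Subsingleton M
    · exact ⟨Empty, inferInstance, Empty.elim, fun k => k.elim, fun k => k.elim, fun k => k.elim,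
        fun k => k.elim, LinearMap.ext fun _ => Subsingleton.elim _ _⟩
    by_cases hM' : Indec M
    · exact ⟨Unit, inferInstance, fun _ => M, fun _ => LinearMap.id, fun _ => LinearMap.id,
        fun _ => hM', fun _ => rfl, by simp⟩
    obtain ⟨e, he, he0, he1⟩ : ∃ e : M →ₗ[A] M, e ∘ₗ e = e ∧ e ≠ 0 ∧ e ≠ LinearMap.id := by
      simpa [Indec, hM] using hM'
    have hee (x : M) : e (e x) = e x := LinearMap.congr_fun he x
    have hlt (N : Submodule A M) (hN : N ≠ ⊤) : ∃ m < n, (m : ℕ∞) = Module.length A N := by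
      have h := Submodule.length_lt hN
      obtain ⟨m, hm⟩ := ENat.ne_top_iff_exists.1 h.ne_top
      exact ⟨m, by rwa [← hn, ← hm, Nat.cast_lt] at h, hm⟩
    have hrange : LinearMap.range e ≠ ⊤ := fun h => he1 <| LinearMap.ext fun x => by
      obtain ⟨y, rfl⟩ := LinearMap.range_eq_top.1 h x
      exact hee y
    obtain ⟨m₁, hm₁, h₁⟩ := hlt _ hrange
    obtain ⟨m₂, hm₂, h₂⟩ := hlt (LinearMap.ker e) (fun h => he0 (LinearMap.ker_eq_top.1 h))
    obtain ⟨κ₁, _, Y₁, s₁, r₁, hY₁, hsr₁, hrs₁⟩ :=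
      ih m₁ hm₁ (ModuleCat.of A (LinearMap.range e)) h₁
    obtain ⟨κ₂, _, Y₂, s₂, r₂, hY₂, hsr₂, hrs₂⟩ := ih m₂ hm₂ (ModuleCat.of A (LinearMap.ker e)) h₂
    let p : M →ₗ[A] LinearMap.ker e := (LinearMap.id - e).codRestrict _ fun x => by simp [hee]
    refine ⟨κ₁ ⊕ κ₂, inferInstance, Sum.elim Y₁ Y₂,
      fun | .inl k => s₁ k ∘ₗ e.rangeRestrict | .inr k => s₂ k ∘ₗ p,
      fun | .inl k => (LinearMap.range e).subtype ∘ₗ r₁ k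
          | .inr k => (LinearMap.ker e).subtype ∘ₗ r₂ k, ?_, ?_, ?_⟩
    · rintro (k | k)
      exacts [hY₁ k, hY₂ k]
    · have hp₁ (x : LinearMap.range e) : e.rangeRestrict x = x := by
        obtain ⟨_, y, rfl⟩ := x
        exact Subtype.ext (hee y)
      have hp₂ (x : LinearMap.ker e) : p x = x := Subtype.ext (by simp [p])
      rintro (k | k) <;> ext x
      · exact (congrArg (s₁ k) (hp₁ _)).trans (LinearMap.congr_fun (hsr₁ k) x)
      · exact (congrArg (s₂ k) (hp₂ _)).trans (LinearMap.congr_fun (hsr₂ k) x)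
    · ext x
      have e₁ := congrArg Subtype.val (LinearMap.congr_fun hrs₁ (e.rangeRestrict x))
      have e₂ := congrArg Subtype.val (LinearMap.congr_fun hrs₂ (p x))
      simp only [LinearMap.sum_apply, LinearMap.comp_apply, AddSubmonoidClass.coe_finsetSum,
        LinearMap.id_apply] at e₁ e₂
      simp only [Fintype.sum_sum_type, LinearMap.add_apply, LinearMap.sum_apply,
        LinearMap.comp_apply, LinearMap.id_apply]
      refine (congrArg₂ (· + ·) e₁ e₂).trans ?_
      simp [p]

theorem Indec.isLocalRing {A : Type u} [Ring A] {M : ModuleCat.{u} A} (hM : Indec M)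
    [IsArtinian A M] [IsNoetherian A M] : IsLocalRing (Module.End A M) := by
  have := not_subsingleton_iff_nontrivial.1 hM.1
  refine .of_isUnit_or_isUnit_one_sub_self fun a => ?_
  obtain ⟨m, hm, hm'⟩ :=
    (a.eventually_isCompl_ker_pow_range_pow.and (Filter.eventually_gt_atTop 0)).exists
  have he : LinearMap.ker (a ^ m) = ⊤ ∨ LinearMap.ker (a ^ m) = ⊥ := by
    refine (hM.2 _ (Submodule.isIdempotentElem_projection hm.symm)).imp (fun h => ?_) fun h => ?_
    · rw [← Submodule.ker_projection hm.symm, h, LinearMap.ker_zero]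
    · rw [← Submodule.ker_projection hm.symm, h, LinearMap.ker_id]
  refine he.symm.imp (fun h => ?_) fun h => ?_
  · refine (isUnit_pow_iff hm'.ne').1 ((Module.End.isUnit_iff _).2
      ⟨LinearMap.ker_eq_bot.1 h, LinearMap.range_eq_top.1 ?_⟩)
    simpa [h] using hm.sup_eq_top
  · exact IsNilpotent.isUnit_one_sub ⟨m, LinearMap.ker_eq_top.1 h⟩

/-- An indecomposable direct summand of a finite direct sum of indecomposable modules is isomorphic
to one of them. -/
theorem IsFiniteSummand.exists_equiv {A : Type u} [Ring A] {κ : Type*} [Fintype κ]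
    {Y : κ → ModuleCat.{u} A} {M : ModuleCat.{u} A} (h : IsFiniteSummand Y M) (hM : Indec M)
    [IsArtinian A M] [IsNoetherian A M] (hY : ∀ k, Indec (Y k)) :
    ∃ k, Nonempty (M ≃ₗ[A] Y k) := by
  obtain ⟨s, r, hrs⟩ := h
  have := hM.isLocalRing
  obtain ⟨k, hk⟩ : ∃ k, IsUnit (r k ∘ₗ s k : Module.End A M) := by
    by_contra! hk
    have : ∑ k, (r k ∘ₗ s k : Module.End A M) ∈ IsLocalRing.nonunitsAddSubmonoid _ :=
      sum_mem fun k _ => hk k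
    rw [hrs] at this
    exact this isUnit_one
  let φ := LinearEquiv.ofBijective (r k ∘ₗ s k) ((Module.End.isUnit_iff _).1 hk)
  have hφ (x : M) : φ.symm (r k (s k x)) = x := φ.symm_apply_apply x
  have hidem := hY k |>.2 (s k ∘ₗ φ.symm.toLinearMap ∘ₗ r k) (by ext x; simp [hφ])
  refine ⟨k, ⟨LinearEquiv.ofLinearMap (s k) (φ.symm.toLinearMap ∘ₗ r k) (hidem.resolve_left ?_)
    (LinearMap.ext hφ)⟩⟩
  intro h0
  refine hM.1 (subsingleton_of_forall_eq 0 fun x => ?_)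
  have := LinearMap.congr_fun h0 (s k x)
  rw [← hφ x]
  simpa [hφ] using congrArg (fun y => φ.symm (r k y)) this

theorem isSummand_directSum_iff {A : Type u} [Ring A] {κ : Type*} [Fintype κ]
    {Y : κ → ModuleCat.{u} A} {M : ModuleCat.{u} A} :
    (∃ (s : M →ₗ[A] DirectSum κ fun k => Y k) (r : (DirectSum κ fun k => Y k) →ₗ[A] M),
      r ∘ₗ s = LinearMap.id) ↔ IsFiniteSummand Y M := by
  classical
  constructor
  · rintro ⟨s, r, h⟩
    refine ⟨fun k => DirectSum.component A κ (fun k => Y k) k ∘ₗ s,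
      fun k => r ∘ₗ DirectSum.lof A κ (fun k => Y k) k, ?_⟩
    ext x
    have := LinearMap.congr_fun h x
    simp only [LinearMap.sum_apply, LinearMap.comp_apply, ← map_sum] at this ⊢
    rw [← this]
    congr 1
    refine DFinsupp.ext fun j => ?_
    change (∑ k, DFinsupp.single k (s x k)) j = s x j
    simp [DFinsupp.finsetSum_apply, DFinsupp.single_apply]
  · rintro ⟨s, r, h⟩
    refine ⟨∑ k, DirectSum.lof A κ (fun k => Y k) k ∘ₗ s k, DirectSum.toModule A κ M r, ?_⟩
    rw [← h]
    ext x
    simp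

namespace InAddOf

variable {A : Type u} [Ring A] {X Z : ModuleCat.{u} A → Prop} {M : ModuleCat.{u} A}

theorem of_isFiniteSummand {κ : Type*} [Fintype κ] {Y : κ → ModuleCat.{u} A}
    (h : IsFiniteSummand Y M) (hY : ∀ k, X (Y k)) : InAddOf X M := by
  obtain ⟨s, r, hrs⟩ := h
  let e := Fintype.equivFin κ
  refine ⟨Fintype.card κ, fun i => Y (e.symm i), fun i => hY _, isSummand_directSum_iff.2
    ⟨fun i => s _, fun i => r _, ?_⟩⟩
  rw [← hrs]
  exact e.symm.sum_comp fun k => r k ∘ₗ s k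

theorem exists_isFiniteSummand (h : InAddOf X M) :
    ∃ (k : ℕ) (Y : Fin k → ModuleCat.{u} A), (∀ i, X (Y i)) ∧ IsFiniteSummand Y M := by
  obtain ⟨k, Y, hY, hM⟩ := h
  exact ⟨k, Y, hY, isSummand_directSum_iff.1 hM⟩

theorem trans (h : InAddOf X M) (hX : ∀ N, X N → InAddOf Z N) : InAddOf Z M := by
  obtain ⟨k, Y, hY, s, r, hrs⟩ := h.exists_isFiniteSummand
  choose l V hV s' r' hrs' using fun i => (hX _ (hY i)).exists_isFiniteSummand
  refine of_isFiniteSummand (κ := Σ i, Fin (l i)) (Y := fun p => V p.1 p.2)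
    ⟨fun p => s' p.1 p.2 ∘ₗ s p.1, fun p => r p.1 ∘ₗ r' p.1 p.2, ?_⟩ fun p => hV _ _
  ext x
  have h (i : Fin k) (y : Y i) : ∑ j, r i (r' i j (s' i j y)) = r i y := by
    rw [← map_sum]
    simpa using congrArg (r i) (LinearMap.congr_fun (hrs' i) y)
  simp only [Fintype.sum_sigma, LinearMap.sum_apply, LinearMap.comp_apply]
  refine (Finset.sum_congr rfl fun i _ => h i (s i x)).trans ?_
  simpa using LinearMap.congr_fun hrs x

theorem of_equiv {N : ModuleCat.{u} A} (hN : X N) (e : M ≃ₗ[A] N) : InAddOf X M :=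
  of_isFiniteSummand (κ := Unit) (Y := fun _ => N)
    ⟨fun _ => e.toLinearMap, fun _ => e.symm.toLinearMap, by ext; simp⟩ fun _ => hN

theorem of_equiv_directSum {κ : Type*} [Finite κ] {Y : κ → ModuleCat.{u} A} (hY : ∀ k, X (Y k))
    (e : M ≃ₗ[A] DirectSum κ fun k => Y k) : InAddOf X M :=
  have := Fintype.ofFinite κ
  of_isFiniteSummand
    (isSummand_directSum_iff.1 ⟨e.toLinearMap, e.symm.toLinearMap, by ext; simp⟩) hY

theorem component_of_equiv {κ : Type*} {Y : κ → ModuleCat.{u} A} {T : ModuleCat.{u} A} (hT : X T)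
    (e : T ≃ₗ[A] DirectSum κ fun k => Y k) (k : κ) : InAddOf X (Y k) := by
  classical
  refine of_isFiniteSummand (κ := Unit) (Y := fun _ => T)
    ⟨fun _ => e.symm.toLinearMap ∘ₗ DirectSum.lof A κ (fun k => Y k) k,
      fun _ => DirectSum.component A κ (fun k => Y k) k ∘ₗ e.toLinearMap, ?_⟩ fun _ => hT
  ext x
  simp [DirectSum.component.lof_self]

end InAddOf

/-- Over an artin algebra, every Ext-injective module in `𝒫` is a direct summand of a finite direct
sum of right `𝒫`-approximations of indecomposable injective modules. -/
theorem ExtInjInP.inAddOf {A : Type u} [Ring A] (R : Type*) [CommRing R] [IsArtinianRing R]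
    [Algebra R A] [Module.Finite R A] {n : ℕ} {I : Fin n → ModuleCat.{u} A}
    (hI : IsCompleteIndecInjFamily I) {B : Fin n → ModuleCat.{u} A} {f : ∀ j, B j →ₗ[A] I j}
    (hf : ∀ j, IsRightApprox InP (f j)) {X : ModuleCat.{u} A} (hX : ExtInjInP X) :
    InAddOf (fun Y => ∃ j, Y = B j) X := by
  have : IsArtinianRing A := .of_finite R A
  have := hX.1.1
  obtain ⟨Q, i, _, hQ, hi⟩ := exists_finite_injective_embedding R X
  obtain ⟨κ, _, Y, s, r, hY, hsr, hrs⟩ := exists_indec_decomposition Q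
  have hσ (k : κ) : ∃ j, Nonempty (Y k ≃ₗ[A] I j) :=
    hI.2.1 (Y k) (.of_surjective (s k) (LinearMap.surjective_of_comp_eq_id _ _ (hsr k)))
      (hQ.of_retract (r k) (s k) (hsr k)) (hY k)
  choose σ φ using hσ
  choose h hh using fun k => (hf (σ k)).2 X hX.1 ((φ k).some.toLinearMap ∘ₗ s k ∘ₗ i)
  let P : ModuleCat.{u} A := ModuleCat.of A (∀ k, B (σ k))
  have hP : InP P := (isFiniteSummand_pi fun k => B (σ k)).inP fun k => (hf (σ k)).1
  let g : X →ₗ[A] P := LinearMap.pi h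
  have hg : Function.Injective g := by
    refine (injective_iff_map_eq_zero g).2 fun x hx => (injective_iff_map_eq_zero i).1 hi x ?_
    have hs (k : κ) : s k (i x) = 0 := by
      have h₁ : h k x = 0 := congrFun hx k
      have h₂ := LinearMap.congr_fun (hh k) x
      simpa [h₁] using h₂.symm
    simpa [hs] using (LinearMap.congr_fun hrs (i x)).symm
  obtain ⟨t, ht⟩ := hX.exists_retraction hP g hg
  refine InAddOf.trans (X := (· = P)) (.of_isFiniteSummand (κ := Unit) (Y := fun _ => P)
    ⟨fun _ => g, fun _ => t, by simpa using ht⟩ fun _ => rfl) ?_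
  rintro _ rfl
  exact .of_isFiniteSummand (isFiniteSummand_pi fun k => B (σ k)) fun k => ⟨σ k, rfl⟩

/-- If `𝒫` is contravariantly finite, then the direct sum `E` of the
indecomposable Ext-injective modules in `𝒫` satisfies `add E = add (⊕ⱼ Aⱼ)`, where the
`Aⱼ → Iⱼ` are the minimal right `𝒫`-approximations of the indecomposable injectives. -/
theorem stmt_14 (Λ : Type u) [Ring Λ] (R : Type u) [CommRing R] [IsArtinianRing R]
    [Algebra R Λ] [Module.Finite R Λ]
    (hcf : ContravariantlyFinite (fun M : ModuleCat.{u} Λᵐᵒᵖ => InP M))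
    {ι : Type u} (F : ι → ModuleCat.{u} Λᵐᵒᵖ) (hF : IsCompleteExtInjFamily F)
    {n : ℕ} (I : Fin n → ModuleCat.{u} Λᵐᵒᵖ) (hI : IsCompleteIndecInjFamily I)
    (A : Fin n → ModuleCat.{u} Λᵐᵒᵖ) (f : ∀ j, A j →ₗ[Λᵐᵒᵖ] I j)
    (hf : ∀ j, IsMinimalRightApprox InP (f j)) :
    ∀ M : ModuleCat.{u} Λᵐᵒᵖ,
      InAddOf (fun Y => Y = ModuleCat.of Λᵐᵒᵖ (DirectSum ι (fun i => ↥(F i)))) M ↔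
      InAddOf (fun Y => Y = ModuleCat.of Λᵐᵒᵖ (DirectSum (Fin n) (fun j => ↥(A j)))) M := by
  have : Module.Finite R Λᵐᵒᵖ :=
    Module.Finite.equiv (MulOpposite.opLinearEquiv R : Λ ≃ₗ[R] Λᵐᵒᵖ)
  have : IsArtinianRing Λᵐᵒᵖ := .of_finite R Λᵐᵒᵖ
  have hA (j : Fin n) : ExtInjInP (A j) := (hf j).extInjInP (hI.1 j).2.1
  have hFA (i : ι) : InAddOf (fun Y => ∃ j, Y = A j) (F i) :=
    (hF.1 i).2.inAddOf R hI fun j => (hf j).1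
  have hfin (j : Fin n) : Module.Finite Λᵐᵒᵖ (A j) := (hA j).1.1
  choose κ _ Y s r hY hsr hrs using fun j => exists_indec_decomposition (A j)
  have hAY (j : Fin n) : IsFiniteSummand (Y j) (A j) := ⟨s j, r j, hrs j⟩
  have hYA (j : Fin n) (k : κ j) : ExtInjInP (Y j k) :=
    IsFiniteSummand.extInjInP (κ := Unit) (Y := fun _ => A j)
      ⟨fun _ => r j k, fun _ => s j k, by simpa using hsr j k⟩ fun _ => hA j
  have hFY (i : ι) : ∃ p : Σ j, κ j, Nonempty (F i ≃ₗ[Λᵐᵒᵖ] Y p.1 p.2) := by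
    have := (hF.1 i).2.1.1
    obtain ⟨k, Z, hZ, hFZ⟩ := ((hFA i).trans (Z := fun N => ∃ p : Σ j, κ j, N = Y p.1 p.2) (by
      rintro _ ⟨j, rfl⟩
      exact .of_isFiniteSummand (hAY j) fun k => ⟨⟨j, k⟩, rfl⟩)).exists_isFiniteSummand
    choose p hp using hZ
    obtain ⟨l, hl⟩ := hFZ.exists_equiv (hF.1 i).1 fun l => hp l ▸ hY _ _
    exact ⟨p l, hp l ▸ hl⟩
  choose p hp using hFY
  have : Finite ι := Finite.of_injective p fun i j hij =>
    hF.2.2 i j ⟨(hp i).some.trans (hij ▸ (hp j).some.symm)⟩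
  refine fun M => ⟨fun hM => hM.trans ?_, fun hM => hM.trans ?_⟩
  · rintro _ rfl
    refine (InAddOf.of_equiv_directSum (X := fun N => ∃ i, N = F i) (fun i => ⟨i, rfl⟩)
      (LinearEquiv.refl _ _)).trans ?_
    rintro _ ⟨i, rfl⟩
    refine (hFA i).trans ?_
    rintro _ ⟨j, rfl⟩
    exact InAddOf.component_of_equiv (X := (· = .of _ (DirectSum _ fun j => A j))) rfl
      (LinearEquiv.refl _ _) j
  · rintro _ rfl
    refine (InAddOf.of_equiv_directSum (X := fun N => ∃ j, N = A j) (fun j => ⟨j, rfl⟩)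
      (LinearEquiv.refl _ _)).trans ?_
    rintro _ ⟨j, rfl⟩
    refine (InAddOf.of_isFiniteSummand (X := fun N => ∃ k, N = Y j k) (hAY j)
      fun k => ⟨k, rfl⟩).trans ?_
    rintro _ ⟨k, rfl⟩
    obtain ⟨i, ⟨e⟩⟩ := hF.2.1 (Y j k) (hY j k) (hYA j k)
    refine (InAddOf.of_equiv (X := (· = F i)) rfl e).trans ?_
    rintro _ rfl
    exact InAddOf.component_of_equiv (X := (· = .of _ (DirectSum _ fun i => F i))) rfl
      (LinearEquiv.refl _ _) i
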